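/- Let Δ be the bicyclic graph built as follows: take two vertices u and v joined by three internally disjoint paths Q₁: v–a₁–⋯–a_k–r₁–b_k–⋯–b₁–u, Q₂: u–d₁–⋯–d_k–r₂–c_k–⋯–c₁–v, and Q₃ of length ℓ ≥ 1 with no trees attached at its internal vertices; attach rooted trees T_j¹ at a_j, T_j² at b_j, T_j³ at c_j, T_j⁴ at d_j for 1 ≤ j ≤ k, rooted trees Θ₁, Θ₂ at r₁, r₂, and rooted trees Υ₁, Υ₂ at u, v. Assume that for each j the trees T_j¹, T_j², T_j³, T_j⁴ are pairwise isomorphic as rooted trees, that Θ₁ ≅ Θ₂ and Υ₁ ≅ Υ₂ as rooted trees, and that ℓ ≠ 2k+2 or at least one of T₁¹, Θ₁ has more than one vertex. Set A_j = Aut(T_j¹)_{root}, H = Aut(Θ₁)_{root}, K = Aut(Υ₁)_{root}. Then Aut(Δ) ≅ ((A₁)⁴ × ⋯ × (A_k)⁴ × H² × K²) ⋊ (Z₂ × Z₂), where the generator induced by exchanging Q₁ and Q₂ while fixing u and v swaps, for each j, the T_j¹-coordinate with the T_j³-coordinate and the T_j²-coordinate with the T_j⁴-coordinate, swaps the two H-coordinates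 and fixes the K-coordinates; and the generator induced by the reflection exchanging u and v while preserving each path setwise swaps, for each j, the T_j¹-coordinate with the T_j²-coordinate and the T_j³-coordinate with the T_j⁴-coordinate, fixes the H-coordinates and swaps the two K-coordinates. -/

import Mathlib

open SimpleGraph

/-- The stabilizer `Aut(G)_v = {f ∈ Aut(G) : f(v) = v}` of a vertex `v` in the automorphism
group of a graph `G`. -/
def autStab {V : Type} (G : SimpleGraph V) (v : V) : Subgroup (G ≃g G) where
  carrier := {f | f v = v}
  one_mem' := rfl
  mul_mem' := by
    intro f g hf hg
    simp only [Set.mem_setOf_eq] at *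
    show f (g v) = v
    rw [hg, hf]
  inv_mem' := by
    intro f hf
    simp only [Set.mem_setOf_eq] at *
    calc f⁻¹ v = f⁻¹ (f v) := by rw [hf]
    _ = v := RelIso.inv_apply_self f v

/-- The automorphism of `ι → G` given by permuting coordinates by `σ`. -/
def permAut {ι G : Type} [Group G] (σ : Equiv.Perm ι) : MulAut (ι → G) where
  toFun f := f ∘ σ.symm
  invFun f := f ∘ σ
  left_inv f := by funext i; simp
  right_inv f := by funext i; simp
  map_mul' f g := rfl

/-- The action of `Equiv.Perm ι` on `ι → G` by permuting coordinates, as a homomorphism. -/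
def permHom (ι G : Type) [Group G] : Equiv.Perm ι →* MulAut (ι → G) where
  toFun := permAut
  map_one' := by ext f i; rfl
  map_mul' σ τ := by ext f i; rfl

/-- Combine two actions-by-automorphisms into one on the direct product. -/
def autProdHom {Q M N : Type} [Group Q] [Group M] [Group N]
    (φ : Q →* MulAut M) (ψ : Q →* MulAut N) : Q →* MulAut (M × N) where
  toFun q := (φ q).prodCongr (ψ q)
  map_one' := by
    show MulEquiv.prodCongr (φ 1) (ψ 1) = 1
    rw [map_one, map_one]; ext x <;> rfl
  map_mul' a b := by
    show MulEquiv.prodCongr (φ (a * b)) (ψ (a * b)) = _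
    rw [map_mul, map_mul]; ext x <;> rfl

/-- Combine a family of actions-by-automorphisms into one on the direct product `∀ i, M i`. -/
def autPiHom {Q : Type} [Group Q] {ι : Type} {M : ι → Type} [∀ i, Group (M i)]
    (φ : ∀ i, Q →* MulAut (M i)) : Q →* MulAut (∀ i, M i) where
  toFun q :=
    { toFun := fun f i => φ i q (f i)
      invFun := fun f i => (φ i q).symm (f i)
      left_inv := fun f => by funext i; simp
      right_inv := fun f => by funext i; simp
      map_mul' := fun f g => by funext i; simp }
  map_one' := by
    ext f i
    show φ i 1 (f i) = f i
    rw [map_one]; rfl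
  map_mul' a b := by
    ext f i
    show φ i (a * b) (f i) = _
    rw [map_mul]; rfl

/-- The translation action of an additive group on itself, as permutations. -/
def transPermHom (A : Type) [AddGroup A] : Multiplicative A →* Equiv.Perm A :=
  MulAction.toPermHom (Multiplicative A) A

/-- The action of (the multiplicative version of) an additive group `A` on `A → G`
by translating the coordinates. -/
def transAutHom (A G : Type) [AddGroup A] [Group G] : Multiplicative A →* MulAut (A → G) :=
  (permHom A G).comp (transPermHom A)

/-- The Klein four-group `Z₂ × Z₂` (written multiplicatively). -/
abbrev K4 : Type := Multiplicative (ZMod 2 × ZMod 2)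

/-- Projection of the Klein four-group onto its first `Z₂` factor. -/
def fstK : K4 →* Multiplicative (ZMod 2) :=
  AddMonoidHom.toMultiplicative (AddMonoidHom.fst (ZMod 2) (ZMod 2))

/-- Projection of the Klein four-group onto its second `Z₂` factor. -/
def sndK : K4 →* Multiplicative (ZMod 2) :=
  AddMonoidHom.toMultiplicative (AddMonoidHom.snd (ZMod 2) (ZMod 2))

/-- The graph obtained from `base` by attaching, for each `i : ι`, the rooted tree
`(T i, t i)` at the vertex `x i` (identifying the root `t i` with `x i`); the attached trees
are pairwise disjoint and disjoint from `base` except at the attachment vertices. -/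
def attachTrees {B : Type} (base : SimpleGraph B) {ι : Type} {W : ι → Type}
    (T : ∀ i, SimpleGraph (W i)) (t : ∀ i, W i) (x : ι → B) :
    SimpleGraph (B ⊕ Σ i, {w : W i // w ≠ t i}) where
  Adj a b :=
    match a, b with
    | .inl a, .inl b => base.Adj a b
    | .inl a, .inr ⟨i, w⟩ => a = x i ∧ (T i).Adj (t i) w.1
    | .inr ⟨i, w⟩, .inl b => b = x i ∧ (T i).Adj (t i) w.1
    | .inr ⟨i, w⟩, .inr ⟨j, w'⟩ => ∃ h : i = j, (T j).Adj (h ▸ w).1 w'.1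
  symm := by
    constructor
    rintro (a | ⟨i, w⟩) (b | ⟨j, w'⟩) h
    · exact SimpleGraph.Adj.symm h
    · exact h
    · exact h
    · obtain ⟨rfl, hw⟩ := h
      exact ⟨rfl, SimpleGraph.Adj.symm hw⟩
  loopless := by
    constructor
    rintro (a | ⟨i, w⟩) h
    · exact base.loopless.irrefl a h
    · obtain ⟨h', hw⟩ := h
      exact (T i).loopless.irrefl _ hw

/-- Vertices of a theta graph: two hub vertices `u`, `v` joined by three internally disjoint
paths having `p`, `q` and `r` internal vertices respectively. -/
inductive ThetaV (p q r : ℕ) : Type where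
  | u : ThetaV p q r
  | v : ThetaV p q r
  | x1 : Fin p → ThetaV p q r
  | x2 : Fin q → ThetaV p q r
  | x3 : Fin r → ThetaV p q r
  deriving DecidableEq

/-- The theta graph: the vertices `u` and `v` joined by three internally disjoint paths of
lengths `p + 1`, `q + 1` and `r + 1`; the internal vertices of each path are indexed starting
from the end adjacent to `v`. -/
def theta (p q r : ℕ) : SimpleGraph (ThetaV p q r) where
  Adj a b :=
    match a, b with
    | .u, .v => p = 0 ∨ q = 0 ∨ r = 0
    | .v, .u => p = 0 ∨ q = 0 ∨ r = 0
    | .v, .x1 i => i.val = 0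
    | .x1 i, .v => i.val = 0
    | .u, .x1 i => i.val = p - 1
    | .x1 i, .u => i.val = p - 1
    | .v, .x2 i => i.val = 0
    | .x2 i, .v => i.val = 0
    | .u, .x2 i => i.val = q - 1
    | .x2 i, .u => i.val = q - 1
    | .v, .x3 i => i.val = 0
    | .x3 i, .v => i.val = 0
    | .u, .x3 i => i.val = r - 1
    | .x3 i, .u => i.val = r - 1
    | .x1 i, .x1 j => i.val + 1 = j.val ∨ j.val + 1 = i.val
    | .x2 i, .x2 j => i.val + 1 = j.val ∨ j.val + 1 = i.val
    | .x3 i, .x3 j => i.val + 1 = j.val ∨ j.val + 1 = i.val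
    | _, _ => False
  symm := by
    constructor
    intro a b h
    cases a <;> cases b <;> simp only [] at h ⊢ <;> tauto
  loopless := by
    constructor
    intro a h
    cases a <;> simp only [] at h <;> omega

/-- Index type for the trees attached in the construction of Corollary 2.3:
for each `j < k` four trees `T_j¹, T_j², T_j³, T_j⁴`, two trees `Θ₁, Θ₂`
and two trees `Υ₁, Υ₂`. -/
abbrev Stmt3Index (k : ℕ) : Type := (Fin 4 × Fin k) ⊕ Fin 2 ⊕ Fin 2

/-- The family of vertex types of the attached trees. -/
def stmt3W {k : ℕ} (WT : Fin 4 → Fin k → Type) (WΘ WΥ : Fin 2 → Type) :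
    Stmt3Index k → Type :=
  fun i =>
    match i with
    | .inl p => WT p.1 p.2
    | .inr (.inl j) => WΘ j
    | .inr (.inr j) => WΥ j

/-- The family of attached trees. -/
def stmt3T {k : ℕ} {WT : Fin 4 → Fin k → Type} {WΘ WΥ : Fin 2 → Type}
    (TT : ∀ a j, SimpleGraph (WT a j)) (TΘ : ∀ j, SimpleGraph (WΘ j))
    (TΥ : ∀ j, SimpleGraph (WΥ j)) :
    ∀ i, SimpleGraph (stmt3W WT WΘ WΥ i) :=
  fun i =>
    match i with
    | .inl p => TT p.1 p.2
    | .inr (.inl j) => TΘ j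
    | .inr (.inr j) => TΥ j

/-- The family of roots of the attached trees. -/
def stmt3root {k : ℕ} {WT : Fin 4 → Fin k → Type} {WΘ WΥ : Fin 2 → Type}
    (tT : ∀ a j, WT a j) (tΘ : ∀ j, WΘ j) (tΥ : ∀ j, WΥ j) :
    ∀ i, stmt3W WT WΘ WΥ i :=
  fun i =>
    match i with
    | .inl p => tT p.1 p.2
    | .inr (.inl j) => tΘ j
    | .inr (.inr j) => tΥ j

/-- Attachment vertices on the theta graph with hub vertices `u`, `v` and paths
`Q₁ : v–a₁–⋯–a_k–r₁–b_k–⋯–b₁–u`, `Q₂ : v–c₁–⋯–c_k–r₂–d_k–⋯–d₁–u` (each of length `2k + 2`)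
and `Q₃` of length `m + 1`: the tree `T_j¹` is attached at `a_j`, `T_j²` at `b_j`,
`T_j³` at `c_j`, `T_j⁴` at `d_j`, the trees `Θ₁, Θ₂` at `r₁, r₂` and `Υ₁, Υ₂` at `u, v`. -/
def stmt3x (k m : ℕ) : Stmt3Index k → ThetaV (2 * k + 1) (2 * k + 1) m :=
  fun i =>
    match i with
    | .inl p =>
        ![ThetaV.x1 ⟨p.2.1, by omega⟩, ThetaV.x1 ⟨2 * k - p.2.1, by have := p.2.2; omega⟩,
          ThetaV.x2 ⟨p.2.1, by omega⟩, ThetaV.x2 ⟨2 * k - p.2.1, by have := p.2.2; omega⟩] p.1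
    | .inr (.inl j) => ![ThetaV.x1 ⟨k, by omega⟩, ThetaV.x2 ⟨k, by omega⟩] j
    | .inr (.inr j) => ![ThetaV.u, ThetaV.v] j

/-- The bicyclic graph of Corollary 2.3. -/
def stmt3Graph (k m : ℕ) {WT : Fin 4 → Fin k → Type} {WΘ WΥ : Fin 2 → Type}
    (TT : ∀ a j, SimpleGraph (WT a j)) (TΘ : ∀ j, SimpleGraph (WΘ j))
    (TΥ : ∀ j, SimpleGraph (WΥ j))
    (tT : ∀ a j, WT a j) (tΘ : ∀ j, WΘ j) (tΥ : ∀ j, WΥ j) :=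
  attachTrees (theta (2 * k + 1) (2 * k + 1) m) (stmt3T TT TΘ TΥ) (stmt3root tT tΘ tΥ)
    (stmt3x k m)

/-- The action of `Z₂ × Z₂` on `(A₁)⁴ × ⋯ × (A_k)⁴ × H² × K²`: for each `j` the four
`A_j`-coordinates are indexed by the elements `(0,0), (0,1), (1,0), (1,1)` of `Z₂ × Z₂`
(corresponding to `T_j¹, T_j², T_j³, T_j⁴`) and translated, so the generator `a = (1,0)`
swaps the `T_j¹`- with the `T_j³`-coordinate and the `T_j²`- with the `T_j⁴`-coordinate,
while `b = (0,1)` swaps the `T_j¹`- with the `T_j²`-coordinate and the `T_j³`- with the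
`T_j⁴`-coordinate; the `H`-coordinates are swapped by `a` and fixed by `b`, and the
`K`-coordinates are fixed by `a` and swapped by `b`. -/
def stmt3act {k : ℕ} (A : Fin k → Type) [∀ j, Group (A j)] (H K : Type) [Group H] [Group K] :
    K4 →* MulAut ((∀ j, ZMod 2 × ZMod 2 → A j) × (ZMod 2 → H) × (ZMod 2 → K)) :=
  autProdHom (autPiHom fun j => transAutHom (ZMod 2 × ZMod 2) (A j))
    (autProdHom ((transAutHom (ZMod 2) H).comp fstK) ((transAutHom (ZMod 2) K).comp sndK))

/-- The group `((A₁)⁴ × ⋯ × (A_k)⁴ × H² × K²) ⋊ (Z₂ × Z₂)`. -/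
def stmt3group {k : ℕ} (A : Fin k → Type) [∀ j, Group (A j)] (H K : Type) [Group H] [Group K] :
    Type :=
  ((∀ j, ZMod 2 × ZMod 2 → A j) × (ZMod 2 → H) × (ZMod 2 → K)) ⋊[stmt3act A H K] K4

instance {k : ℕ} (A : Fin k → Type) [∀ j, Group (A j)] (H K : Type) [Group H] [Group K] :
    Group (stmt3group A H K) :=
  inferInstanceAs (Group (_ ⋊[stmt3act A H K] K4))

section AttachGeneric

variable {B : Type} (base : SimpleGraph B) {ι : Type} {W : ι → Type}
    (T : ∀ i, SimpleGraph (W i)) (t : ∀ i, W i) (x : ι → B)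

theorem tree_parent_unique {V : Type} {G : SimpleGraph V} (hG : G.IsTree) (r v y z : V)
    (hy : G.Adj y v) (hz : G.Adj z v) (hdy : G.dist r v = G.dist r y + 1)
    (hdz : G.dist r v = G.dist r z + 1) : y = z := by
  obtain ⟨p, hp, hp'⟩ := (hG.connected r y).exists_path_of_dist
  obtain ⟨q, hq, hq'⟩ := (hG.connected r z).exists_path_of_dist
  have h1 : (p.concat hy).IsPath := by
    apply Walk.isPath_of_length_eq_dist
    rw [Walk.length_concat]; omega
  have h2 : (q.concat hz).IsPath := by
    apply Walk.isPath_of_length_eq_dist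
    rw [Walk.length_concat]; omega
  have h3 := (hG.existsUnique_path r v).unique h1 h2
  have := congrArg Walk.penultimate h3
  simpa using this

/-- A set in which each vertex has two distinct neighbours. -/
def TwoDense {V : Type} (G : SimpleGraph V) (S : Set V) : Prop :=
  ∀ a ∈ S, ∃ b ∈ S, ∃ c ∈ S, b ≠ c ∧ G.Adj a b ∧ G.Adj a c

open Classical in
/-- The embedding of an attached tree. -/
noncomputable def embT (i : ι) (w : W i) : B ⊕ Σ i, {w : W i // w ≠ t i} :=
  if h : w = t i then .inl (x i) else .inr ⟨i, w, h⟩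

theorem embT_root (i : ι) : embT t x i (t i) = .inl (x i) := by simp [embT]

theorem embT_ne (i : ι) (w : W i) (h : w ≠ t i) : embT t x i w = .inr ⟨i, w, h⟩ := by
  simp [embT, h]

theorem embT_inj (i : ι) : Function.Injective (embT t x i) := by
  intro w w' h
  by_cases h1 : w = t i <;> by_cases h2 : w' = t i
  · rw [h1, h2]
  · subst h1; rw [embT_root, embT_ne _ _ _ _ h2] at h; cases h
  · subst h2; rw [embT_root, embT_ne _ _ _ _ h1] at h; cases h
  · rw [embT_ne _ _ _ _ h1, embT_ne _ _ _ _ h2] at h; cases h; rfl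

theorem embT_adj (i : ι) (w w' : W i) :
    (attachTrees base T t x).Adj (embT t x i w) (embT t x i w') ↔ (T i).Adj w w' := by
  by_cases h1 : w = t i <;> by_cases h2 : w' = t i
  · subst h1; subst h2; simp
  · subst h1; rw [embT_root, embT_ne _ _ _ _ h2]
    show (_ ∧ _) ↔ _
    simp
  · subst h2; rw [embT_root, embT_ne _ _ _ _ h1]
    show (_ ∧ _) ↔ _
    simp [SimpleGraph.adj_comm]
  · rw [embT_ne _ _ _ _ h1, embT_ne _ _ _ _ h2]
    show (∃ h : i = i, _) ↔ _
    simp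

theorem adj_inr (i : ι) (w : {w : W i // w ≠ t i}) (z)
    (h : (attachTrees base T t x).Adj (.inr ⟨i, w⟩) z) :
    ∃ y, z = embT t x i y ∧ (T i).Adj w.1 y := by
  rcases z with b | ⟨j, w'⟩
  · obtain ⟨h1, h2⟩ := h
    refine ⟨t i, ?_, h2.symm⟩
    rw [embT_root, h1]
  · obtain ⟨rfl, h2⟩ := h
    exact ⟨w'.1, by rw [embT_ne _ _ _ _ w'.2], h2⟩

theorem twoDense_not_inr [∀ i, Finite (W i)] (hT : ∀ i, (T i).IsTree) (S)
    (hS : TwoDense (attachTrees base T t x) S) (i : ι) (w : {w : W i // w ≠ t i}) :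
    (.inr ⟨i, w⟩ : B ⊕ Σ i, {w : W i // w ≠ t i}) ∉ S := by
  intro hw
  obtain ⟨a, ⟨ha, haS⟩, hmax⟩ := Set.exists_max_image
    {w : W i | ∃ h : w ≠ t i, (.inr ⟨i, w, h⟩ : B ⊕ Σ i, {w : W i // w ≠ t i}) ∈ S}
    (fun w => (T i).dist (t i) w) (Set.toFinite _) ⟨w.1, w.2, hw⟩
  have key : ∀ z ∈ S, (attachTrees base T t x).Adj (.inr ⟨i, a, ha⟩) z →
      ∃ y, z = embT t x i y ∧ (T i).Adj y a ∧
        (T i).dist (t i) a = (T i).dist (t i) y + 1 := by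
    intro z hz hadj
    obtain ⟨y, rfl, hy⟩ := adj_inr base T t x i _ z hadj
    refine ⟨y, rfl, hy.symm, ?_⟩
    have hle : (T i).dist (t i) y ≤ (T i).dist (t i) a := by
      by_cases hyt : y = t i
      · rw [hyt]; simp
      · apply hmax
        rw [embT_ne _ _ _ _ hyt] at hz
        exact ⟨hyt, hz⟩
    rcases (hT i).dist_eq_dist_add_one_of_adj (t i) hy with h | h
    · exact h
    · simp only at h; omega
  obtain ⟨b, hb, c, hc, hbc, hab, hac⟩ := hS _ haS
  obtain ⟨y, rfl, hy1, hy2⟩ := key b hb hab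
  obtain ⟨z, rfl, hz1, hz2⟩ := key c hc hac
  exact hbc (by rw [tree_parent_unique (hT i) _ _ _ _ hy1 hz1 hy2 hz2])

theorem twoDense_map {V : Type} {G : SimpleGraph V} (f : G ≃g G) (S : Set V)
    (hS : TwoDense G S) : TwoDense G (f '' S) := by
  rintro _ ⟨a, ha, rfl⟩
  obtain ⟨b, hb, c, hc, hbc, hab, hac⟩ := hS a ha
  exact ⟨f b, ⟨b, hb, rfl⟩, f c, ⟨c, hc, rfl⟩, fun h => hbc (f.injective h),
    f.map_rel_iff.2 hab, f.map_rel_iff.2 hac⟩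

theorem twoDense_base
    (hbase : ∀ a, ∃ b c, b ≠ c ∧ base.Adj a b ∧ base.Adj a c) : TwoDense (attachTrees base T t x) (Set.range Sum.inl) := by
  rintro _ ⟨a, rfl⟩
  obtain ⟨b, c, hbc, h1, h2⟩ := hbase a
  exact ⟨_, ⟨b, rfl⟩, _, ⟨c, rfl⟩, fun h => hbc (Sum.inl_injective h), h1, h2⟩

theorem aut_inl
    (hbase : ∀ a, ∃ b c, b ≠ c ∧ base.Adj a b ∧ base.Adj a c) [∀ i, Finite (W i)] (hT : ∀ i, (T i).IsTree)
    (f : attachTrees base T t x ≃g attachTrees base T t x) (b : B) :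
    ∃ b', f (.inl b) = .inl b' := by
  have h := twoDense_map f _ (twoDense_base base T t x hbase)
  rcases hz : f (.inl b) with b' | ⟨i, w⟩
  · exact ⟨b', rfl⟩
  · exact absurd ⟨_, ⟨b, rfl⟩, hz⟩ (twoDense_not_inr base T t x hT _ h i w)

theorem aut_inr
    (hbase : ∀ a, ∃ b c, b ≠ c ∧ base.Adj a b ∧ base.Adj a c) [∀ i, Finite (W i)] (hT : ∀ i, (T i).IsTree)
    (f : attachTrees base T t x ≃g attachTrees base T t x) (z) :
    ∃ z', f (.inr z) = .inr z' := by
  rcases hz : f (.inr z) with b' | z'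
  · obtain ⟨b, hb⟩ := aut_inl base T t x hbase hT f.symm b'
    rw [← hz] at hb
    simp at hb
  · exact ⟨z', rfl⟩

theorem aut_base
    (hbase : ∀ a, ∃ b c, b ≠ c ∧ base.Adj a b ∧ base.Adj a c) [∀ i, Finite (W i)] (hT : ∀ i, (T i).IsTree)
    (f : attachTrees base T t x ≃g attachTrees base T t x) :
    ∃ g : base ≃g base, ∀ b, f (.inl b) = .inl (g b) := by
  choose g hg using aut_inl base T t x hbase hT f
  choose g' hg' using aut_inl base T t x hbase hT f.symm
  refine ⟨⟨⟨g, g', fun b => ?_, fun b => ?_⟩, ?_⟩, hg⟩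
  · apply Sum.inl_injective (β := Σ i, {w : W i // w ≠ t i})
    rw [← hg', ← hg]; simp
  · apply Sum.inl_injective (β := Σ i, {w : W i // w ≠ t i})
    rw [← hg, ← hg']; simp
  · intro a b
    have := f.map_rel_iff (a := .inl a) (b := .inl b)
    rw [hg, hg] at this
    exact this

/-- The retraction to the base. -/
def retr : (B ⊕ Σ i, {w : W i // w ≠ t i}) → B
  | .inl b => b
  | .inr z => x z.1

theorem retr_emb (i : ι) (w : W i) : retr t x (embT t x i w) = x i := by
  by_cases h : w = t i
  · subst h; rw [embT_root]; rfl
  · rw [embT_ne _ _ _ _ h]; rfl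

theorem retr_adj (z z') (h : (attachTrees base T t x).Adj (.inr z) z') :
    retr t x z' = x z.1 := by
  obtain ⟨y, rfl, -⟩ := adj_inr base T t x z.1 z.2 z' h
  exact retr_emb t x _ _

theorem aut_retr
    (hbase : ∀ a, ∃ b c, b ≠ c ∧ base.Adj a b ∧ base.Adj a c) [∀ i, Finite (W i)] (hT : ∀ i, (T i).IsTree)
    (f : attachTrees base T t x ≃g attachTrees base T t x) (g : B → B)
    (hg : ∀ b, f (.inl b) = .inl (g b)) (i : ι) (w : W i) :
    retr t x (f (embT t x i w)) = g (x i) := by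
  obtain ⟨p⟩ := (hT i).connected w (t i)
  have : ∀ (a b : W i) (p : (T i).Walk a b), b = t i →
      retr t x (f (embT t x i a)) = g (x i) := by
    intro a b p
    induction p with
    | nil => rintro rfl; rw [embT_root, hg]; rfl
    | @cons a b c h p ih =>
      intro hc
      have ih := ih hc
      have hadj : (attachTrees base T t x).Adj (f (embT t x i a)) (f (embT t x i b)) :=
        f.map_rel_iff.2 ((embT_adj base T t x i a b).2 h)
      by_cases ha : a = t i
      · subst ha; rw [embT_root, hg]; rfl
      · rw [embT_ne _ _ _ _ ha] at hadj ⊢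
        obtain ⟨z', hz'⟩ := aut_inr base T t x hbase hT f ⟨i, a, ha⟩
        rw [hz'] at hadj ⊢
        rw [← ih, retr_adj base T t x _ _ hadj]; rfl
  exact this _ _ p rfl

theorem aut_emb
    (hbase : ∀ a, ∃ b c, b ≠ c ∧ base.Adj a b ∧ base.Adj a c) [∀ i, Finite (W i)] (hT : ∀ i, (T i).IsTree) (hx : Function.Injective x)
    (f : attachTrees base T t x ≃g attachTrees base T t x)
    (hg : ∀ b, f (.inl b) = .inl b) (i : ι) (w : W i) :
    ∃ w', f (embT t x i w) = embT t x i w' := by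
  have h := aut_retr base T t x hbase hT f id hg i w
  by_cases ha : w = t i
  · exact ⟨w, by subst ha; rw [embT_root, hg]⟩
  · rw [embT_ne _ _ _ _ ha] at h ⊢
    obtain ⟨⟨j, z'⟩, hz'⟩ := aut_inr base T t x hbase hT f ⟨i, w, ha⟩
    rw [hz'] at h ⊢
    obtain rfl : j = i := hx h
    exact ⟨z'.1, (embT_ne _ _ _ _ z'.2).symm⟩

theorem aut_local
    (hbase : ∀ a, ∃ b c, b ≠ c ∧ base.Adj a b ∧ base.Adj a c) [∀ i, Finite (W i)] (hT : ∀ i, (T i).IsTree) (hx : Function.Injective x)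
    (f : attachTrees base T t x ≃g attachTrees base T t x)
    (hg : ∀ b, f (.inl b) = .inl b) (i : ι) :
    ∃ n : autStab (T i) (t i), ∀ w, f (embT t x i w) = embT t x i (n.1 w) := by
  have hg' : ∀ b, f.symm (.inl b) = .inl b := fun b => by
    rw [RelIso.symm_apply_eq]; exact (hg b).symm
  choose n hn using aut_emb base T t x hbase hT hx f hg i
  choose n' hn' using aut_emb base T t x hbase hT hx f.symm hg' i
  refine ⟨⟨⟨⟨n, n', fun b => ?_, fun b => ?_⟩, ?_⟩, ?_⟩, hn⟩
  · apply embT_inj t x i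
    rw [← hn', ← hn]; simp
  · apply embT_inj t x i
    rw [← hn, ← hn']; simp
  · intro a b
    have := f.map_rel_iff (a := embT t x i a) (b := embT t x i b)
    rw [hn, hn, embT_adj, embT_adj] at this
    exact this
  · show n (t i) = t i
    apply embT_inj t x i
    rw [← hn, embT_root, hg]

theorem aut_nontriv
    (hbase : ∀ a, ∃ b c, b ≠ c ∧ base.Adj a b ∧ base.Adj a c) [∀ i, Finite (W i)] (hT : ∀ i, (T i).IsTree)
    (f : attachTrees base T t x ≃g attachTrees base T t x) (g : B → B)
    (hg : ∀ b, f (.inl b) = .inl (g b)) (i : ι) (hi : Nontrivial (W i)) :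
    ∃ j, g (x i) = x j := by
  obtain ⟨w, hw⟩ := exists_ne (t i)
  have h := aut_retr base T t x hbase hT f g hg i w
  rw [embT_ne _ _ _ _ hw] at h
  obtain ⟨z', hz'⟩ := aut_inr base T t x hbase hT f ⟨i, w, hw⟩
  rw [hz'] at h
  exact ⟨z'.1, h.symm⟩

variable {T t x} in
/-- Reindexing and replacing the attached trees by isomorphic ones. -/
theorem attach_congr {ι' : Type} {W' : ι' → Type}
    (T' : ∀ i, SimpleGraph (W' i)) (t' : ∀ i, W' i) (x' : ι' → B)
    (σ : ι ≃ ι') (e : ∀ i, T i ≃g T' (σ i)) (he : ∀ i, e i (t i) = t' (σ i))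
    (hx : ∀ i, x' (σ i) = x i) :
    Nonempty (attachTrees base T t x ≃g attachTrees base T' t' x') := by
  have hne : ∀ i w, w ≠ t i → e i w ≠ t' (σ i) := fun i w h h' =>
    h ((e i).injective (h'.trans (he i).symm))
  let F : (B ⊕ Σ i, {w : W i // w ≠ t i}) → (B ⊕ Σ i, {w : W' i // w ≠ t' i})
    | .inl b => .inl b
    | .inr ⟨i, w⟩ => .inr ⟨σ i, e i w.1, hne i _ w.2⟩
  have hF : Function.Bijective F := by
    constructor
    · rintro (a | ⟨i, w, hw⟩) (b | ⟨j, w', hw'⟩) h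
      · cases h; rfl
      · cases h
      · cases h
      · simp only [F, Sum.inr.injEq, Sigma.mk.injEq] at h
        obtain ⟨h1, h2⟩ := h
        obtain rfl := σ.injective h1
        have h3 := congrArg Subtype.val (eq_of_heq h2)
        obtain rfl := (e i).injective h3
        rfl
    · rintro (a | ⟨i, w, hw⟩)
      · exact ⟨.inl a, rfl⟩
      · obtain ⟨i, rfl⟩ := σ.surjective i
        obtain ⟨w, rfl⟩ := (e i).surjective w
        exact ⟨.inr ⟨i, w, fun h => hw (by rw [h, he])⟩, rfl⟩
  refine ⟨⟨Equiv.ofBijective F hF, ?_⟩⟩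
  rintro (a | ⟨i, w, hw⟩) (b | ⟨j, w', hw'⟩)
  · exact Iff.rfl
  · show (a = x' (σ j) ∧ (T' (σ j)).Adj (t' (σ j)) (e j w')) ↔ (a = x j ∧ (T j).Adj (t j) w')
    rw [hx, ← he, (e j).map_adj_iff]
  · show (b = x' (σ i) ∧ (T' (σ i)).Adj (t' (σ i)) (e i w)) ↔ (b = x i ∧ (T i).Adj (t i) w)
    rw [hx, ← he, (e i).map_adj_iff]
  · constructor
    · rintro ⟨h, h2⟩
      obtain rfl := σ.injective h
      exact ⟨rfl, (e i).map_adj_iff.1 h2⟩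
    · rintro ⟨h, h2⟩
      subst h
      exact ⟨rfl, (e i).map_adj_iff.2 h2⟩

end AttachGeneric

section Abstract

variable {B : Type} (base : SimpleGraph B) {C Q : Type} [Group Q] {I : C → Type}
    [∀ c, MulAction Q (I c)] {U : C → Type} (R : ∀ c, SimpleGraph (U c)) (t : ∀ c, U c)
    (x : (Σ c, I c) → B) (ρ : Q →* (base ≃g base))

/-- The action on the product of the tree stabilizers. -/
def treeAct (Q : Type) [Group Q] (I : C → Type) [∀ c, MulAction Q (I c)]
    {U : C → Type} (R : ∀ c, SimpleGraph (U c)) (t : ∀ c, U c) :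
    Q →* MulAut (∀ c, I c → autStab (R c) (t c)) :=
  autPiHom fun c => (permHom (I c) (autStab (R c) (t c))).comp (MulAction.toPermHom Q (I c))

theorem treeAct_apply (q : Q) (n : ∀ c, I c → autStab (R c) (t c)) (c : C) (s : I c) :
    treeAct Q I R t q n c s = n c (q⁻¹ • s) := rfl

theorem stab_ne {V : Type} {G : SimpleGraph V} {r : V} (n : autStab G r) {w : V} (hw : w ≠ r) :
    n.1 w ≠ r := fun h => hw (n.1.injective (h.trans (show n.1 r = r from n.2).symm))

/-- The underlying map of the automorphism attached to an element of the semidirect product. -/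
def treeFun (n : ∀ c, I c → autStab (R c) (t c)) (q : Q) :
    (B ⊕ Σ i : (Σ c, I c), {w : U i.1 // w ≠ t i.1}) →
      (B ⊕ Σ i : (Σ c, I c), {w : U i.1 // w ≠ t i.1})
  | .inl b => .inl (ρ q b)
  | .inr ⟨⟨c, s⟩, w⟩ => .inr ⟨⟨c, q • s⟩, (n c (q • s)).1 w.1, stab_ne _ w.2⟩

theorem treeFun_mul (a b : (∀ c, I c → autStab (R c) (t c)) ⋊[treeAct Q I R t] Q) (z) :
    treeFun base R t ρ (a * b).left (a * b).right z =
      treeFun base R t ρ a.left a.right (treeFun base R t ρ b.left b.right z) := by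
  rcases z with z | ⟨⟨c, s⟩, w, hw⟩
  · simp only [treeFun, SemidirectProduct.mul_right, map_mul]; rfl
  · simp only [treeFun, SemidirectProduct.mul_right, SemidirectProduct.mul_left]
    have h1 : (a.right * b.right) • s = a.right • b.right • s := mul_smul _ _ _
    congr 1
    have key : ∀ (s1 s2 : I c) (w1 w2 : U c) (h1 : w1 ≠ t c) (h2 : w2 ≠ t c),
        s1 = s2 → w1 = w2 → ((⟨⟨c, s1⟩, w1, h1⟩ : Σ i : (Σ c, I c), {w : U i.1 // w ≠ t i.1}) =
          ⟨⟨c, s2⟩, w2, h2⟩) := by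
      rintro s1 s2 w1 w2 h1 h2 rfl rfl; rfl
    apply key _ _ _ _ _ _ h1
    show ((a.left * treeAct Q I R t a.right b.left) c ((a.right * b.right) • s)).1 w = _
    rw [Pi.mul_apply, Pi.mul_apply, treeAct_apply, h1, inv_smul_smul]
    rfl

theorem treeFun_one (z) :
    treeFun base R t ρ (1 : (∀ c, I c → autStab (R c) (t c)) ⋊[treeAct Q I R t] Q).left
      (1 : (∀ c, I c → autStab (R c) (t c)) ⋊[treeAct Q I R t] Q).right z = z := by
  rcases z with z | ⟨⟨c, s⟩, w, hw⟩
  · simp only [treeFun, SemidirectProduct.one_right, map_one]; rfl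
  · simp only [treeFun, SemidirectProduct.one_right, SemidirectProduct.one_left]
    congr 1
    have key : ∀ (s1 s2 : I c) (w1 w2 : U c) (h1 : w1 ≠ t c) (h2 : w2 ≠ t c),
        s1 = s2 → w1 = w2 → ((⟨⟨c, s1⟩, w1, h1⟩ : Σ i : (Σ c, I c), {w : U i.1 // w ≠ t i.1}) =
          ⟨⟨c, s2⟩, w2, h2⟩) := by
      rintro s1 s2 w1 w2 h1 h2 rfl rfl; rfl
    exact key _ _ _ _ _ _ (one_smul _ _) rfl

theorem treeFun_adj (hρx : ∀ q c s, ρ q (x ⟨c, s⟩) = x ⟨c, q • s⟩)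
    (n : ∀ c, I c → autStab (R c) (t c)) (q : Q) (z z') :
    (attachTrees base (fun i : (Σ c, I c) => R i.1) (fun i => t i.1) x).Adj
      (treeFun base R t ρ n q z) (treeFun base R t ρ n q z') ↔
    (attachTrees base (fun i : (Σ c, I c) => R i.1) (fun i => t i.1) x).Adj z z' := by
  have hmix : ∀ (a : B) (c : C) (s : I c) (w : U c),
      (ρ q a = x ⟨c, q • s⟩ ∧ (R c).Adj (t c) ((n c (q • s)).1 w)) ↔
      (a = x ⟨c, s⟩ ∧ (R c).Adj (t c) w) := by
    intro a c s w
    rw [← hρx, (ρ q).injective.eq_iff]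
    apply and_congr_right; intro _
    have h : (n c (q • s)).1 (t c) = t c := (n c (q • s)).2
    have h2 := (n c (q • s)).1.map_adj_iff (v := t c) (w := w)
    rw [h] at h2
    exact h2
  rcases z with a | ⟨⟨c, s⟩, w, hw⟩ <;> rcases z' with a' | ⟨⟨c', s'⟩, w', hw'⟩
  · exact (ρ q).map_adj_iff
  · exact hmix a c' s' w'
  · exact hmix a' c s w
  · constructor
    · rintro ⟨h, h2⟩
      have h0 : c = c' := congrArg Sigma.fst h
      subst h0
      have h1 : s = s' := by
        have := eq_of_heq (Sigma.mk.inj h).2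
        exact MulAction.injective q this
      subst h1
      exact ⟨rfl, (n c (q • s)).1.map_adj_iff.1 h2⟩
    · rintro ⟨h, h2⟩
      cases h
      exact ⟨rfl, (n c (q • s)).1.map_adj_iff.2 h2⟩

/-- The homomorphism from the semidirect product to the automorphism group. -/
def treeSemiHom (hρx : ∀ q c s, ρ q (x ⟨c, s⟩) = x ⟨c, q • s⟩) :
    (∀ c, I c → autStab (R c) (t c)) ⋊[treeAct Q I R t] Q →*
    (attachTrees base (fun i : (Σ c, I c) => R i.1) (fun i => t i.1) x ≃g
      attachTrees base (fun i : (Σ c, I c) => R i.1) (fun i => t i.1) x) where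
  toFun a :=
    { toFun := treeFun base R t ρ a.left a.right
      invFun := treeFun base R t ρ a⁻¹.left a⁻¹.right
      left_inv := fun z => by rw [← treeFun_mul, inv_mul_cancel, treeFun_one]
      right_inv := fun z => by rw [← treeFun_mul, mul_inv_cancel, treeFun_one]
      map_rel_iff' := treeFun_adj base R t x ρ hρx _ _ _ _ }
  map_one' := by
    apply RelIso.ext; intro z; exact treeFun_one base R t ρ z
  map_mul' a b := by
    apply RelIso.ext; intro z; exact treeFun_mul base R t ρ a b z

theorem treeMain [∀ c, Finite (U c)] (hR : ∀ c, (R c).IsTree)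
    (hx : Function.Injective x) (hρ : Function.Injective ρ)
    (hbase : ∀ a, ∃ b c, b ≠ c ∧ base.Adj a b ∧ base.Adj a c)
    (hclass : ∀ g : base ≃g base,
      (∀ i : (Σ c, I c), Nontrivial (U i.1) → ∃ j, g (x i) = x j) → ∃ q, ρ q = g)
    (hρx : ∀ q c s, ρ q (x ⟨c, s⟩) = x ⟨c, q • s⟩) :
    Nonempty ((∀ c, I c → autStab (R c) (t c)) ⋊[treeAct Q I R t] Q ≃*
    (attachTrees base (fun i : (Σ c, I c) => R i.1) (fun i => t i.1) x ≃g
      attachTrees base (fun i : (Σ c, I c) => R i.1) (fun i => t i.1) x)) := by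
  refine ⟨MulEquiv.ofBijective (treeSemiHom base R t x ρ hρx) ⟨?_, ?_⟩⟩
  · rw [injective_iff_map_eq_one]
    intro a ha
    have hz : ∀ z, treeFun base R t ρ a.left a.right z = z := fun z => DFunLike.congr_fun ha z
    have hr : a.right = 1 := by
      apply hρ
      rw [map_one]
      apply RelIso.ext
      intro b
      exact Sum.inl_injective (hz (.inl b))
    rcases a with ⟨n, q⟩
    simp only at hr hz
    subst hr
    refine SemidirectProduct.ext ?_ rfl
    funext c s
    apply Subtype.ext
    apply RelIso.ext
    intro w
    show (n c s).1 w = w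
    by_cases hw : w = t c
    · rw [hw]; exact (n c s).2
    · have h := hz (.inr ⟨⟨c, s⟩, w, hw⟩)
      simp only [treeFun] at h
      have key : ∀ (s1 s2 : I c) (w1 w2 : U c) (h1 : w1 ≠ t c) (h2 : w2 ≠ t c),
        ((⟨⟨c, s1⟩, w1, h1⟩ : Σ i : (Σ c, I c), {w : U i.1 // w ≠ t i.1}) =
          ⟨⟨c, s2⟩, w2, h2⟩) → w1 = w2 := by
        rintro s1 s2 w1 w2 h1 h2 h; cases h; rfl
      have := key _ _ _ _ _ _ (Sum.inr_injective h)
      rwa [one_smul] at this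
  · intro f
    obtain ⟨g, hg⟩ := aut_base base _ _ x hbase (fun i => hR i.1) f
    obtain ⟨q, rfl⟩ := hclass g
      (fun i hi => aut_nontriv base _ _ x hbase (fun i => hR i.1) f g hg i hi)
    set Φ := treeSemiHom base R t x ρ hρx with hΦ
    let f' := (Φ ⟨1, q⟩)⁻¹ * f
    have hf' : ∀ b, f' (.inl b) = .inl b := by
      intro b
      show (Φ ⟨1, q⟩)⁻¹ (f (.inl b)) = _
      rw [hg]
      exact RelIso.inv_apply_self (Φ ⟨1, q⟩) (.inl b)
    choose n hn using aut_local base _ _ x hbase (fun i => hR i.1) hx f' hf'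
    have h1 : Φ ⟨fun c s => n ⟨c, s⟩, 1⟩ = f' := by
      apply RelIso.ext
      rintro (b | ⟨⟨c, s⟩, w, hw⟩)
      · rw [hf']
        show Sum.inl (ρ 1 b) = _
        rw [map_one]; rfl
      · have h2 := hn ⟨c, s⟩ w
        rw [embT_ne (fun i : (Σ c, I c) => t i.1) x ⟨c, s⟩ w hw,
          embT_ne (fun i : (Σ c, I c) => t i.1) x ⟨c, s⟩ _ (stab_ne _ hw)] at h2
        rw [h2]
        show Sum.inr _ = _
        congr 1
        have key : ∀ (s1 s2 : I c) (h : s1 = s2),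
          ((⟨⟨c, s1⟩, (n ⟨c, s1⟩).1 w, stab_ne _ hw⟩ :
            Σ i : (Σ c, I c), {w : U i.1 // w ≠ t i.1}) =
            ⟨⟨c, s2⟩, (n ⟨c, s2⟩).1 w, stab_ne _ hw⟩) := by
          rintro s1 s2 rfl; rfl
        exact key _ _ (one_smul _ _)
    refine ⟨⟨1, q⟩ * ⟨fun c s => n ⟨c, s⟩, 1⟩, ?_⟩
    rw [map_mul, h1]
    exact mul_inv_cancel_left _ _

end Abstract

section ThetaPart

/-- Following two paths along an automorphism. -/
theorem follow {V : Type} {G : SimpleGraph V} (g : G ≃g G) (y z : ℕ → V) (n : ℕ)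
    (h0 : g (y 0) = z 0) (h1 : g (y 1) = z 1)
    (hy : ∀ i, i < n → G.Adj (y (i + 1)) (y (i + 2)) ∧ y (i + 2) ≠ y i)
    (hz : ∀ i, i < n → ∀ a, G.Adj (z (i + 1)) a → a = z i ∨ a = z (i + 2)) :
    ∀ i, i ≤ n → g (y i) = z i ∧ g (y (i + 1)) = z (i + 1) := by
  intro i
  induction i with
  | zero => exact fun _ => ⟨h0, h1⟩
  | succ i ih =>
    intro hi
    obtain ⟨ha, hb⟩ := ih (by omega)
    refine ⟨hb, ?_⟩
    obtain ⟨hc, hd⟩ := hy i (by omega)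
    have he := g.map_adj_iff.2 hc
    rw [hb] at he
    rcases hz i (by omega) _ he with h | h
    · rw [← ha] at h
      exact absurd (g.injective h) hd
    · exact h

/-- An arm of a theta graph: a path between `v` and `u`. -/
structure IsArm {V : Type} (G : SimpleGraph V) (u v : V) (n : ℕ) (e : Fin n → V) : Prop where
  inj : Function.Injective e
  neu : ∀ i, e i ≠ u
  nev : ∀ i, e i ≠ v
  adjv : ∀ i, G.Adj (e i) v ↔ i.val = 0
  adju : ∀ i, G.Adj (e i) u ↔ i.val = n - 1
  adje : ∀ i j, G.Adj (e i) (e j) ↔ (i.val + 1 = j.val ∨ j.val + 1 = i.val)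
  only : ∀ i a, G.Adj (e i) a → a = u ∨ a = v ∨ ∃ j, a = e j

/-- The sequence of vertices along an arm. -/
def armSeq {V : Type} (u v : V) (n : ℕ) (e : Fin n → V) (i : ℕ) : V :=
  if i = 0 then v else if h : i - 1 < n then e ⟨i - 1, h⟩ else u

section
variable {V : Type} {G : SimpleGraph V} {u v : V} {n : ℕ} {e : Fin n → V}

theorem armSeq_zero : armSeq u v n e 0 = v := by simp [armSeq]

theorem armSeq_mid (i : ℕ) (h : i < n) : armSeq u v n e (i + 1) = e ⟨i, h⟩ := by
  simp [armSeq, h]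

theorem armSeq_end (i : ℕ) (h : ¬ i < n) : armSeq u v n e (i + 1) = u := by
  simp [armSeq, h]

theorem IsArm.next (hA : IsArm G u v n e) (huv : u ≠ v) (i : ℕ) (hi : i < n) :
    G.Adj (armSeq u v n e (i + 1)) (armSeq u v n e (i + 2)) ∧
      armSeq u v n e (i + 2) ≠ armSeq u v n e i := by
  rw [armSeq_mid i hi]
  by_cases h : i + 1 < n
  · rw [armSeq_mid (i + 1) h]
    refine ⟨(hA.adje _ _).2 (Or.inl rfl), ?_⟩
    cases i with
    | zero => rw [armSeq_zero]; exact hA.nev _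
    | succ i =>
      rw [armSeq_mid i (by omega)]
      intro h'
      have := congrArg Fin.val (hA.inj h')
      simp at this; omega
  · rw [armSeq_end (i + 1) h]
    refine ⟨(hA.adju _).2 (by simp; omega), ?_⟩
    cases i with
    | zero => rw [armSeq_zero]; exact huv
    | succ i => rw [armSeq_mid i (by omega)]; exact (hA.neu _).symm

theorem IsArm.prev (hA : IsArm G u v n e) (i : ℕ) (hi : i < n) :
    G.Adj (armSeq u v n e (i + 1)) (armSeq u v n e i) := by
  rw [armSeq_mid i hi]
  cases i with
  | zero => rw [armSeq_zero]; exact (hA.adjv _).2 rfl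
  | succ i => rw [armSeq_mid i (by omega)]; exact (hA.adje _ _).2 (Or.inr rfl)

theorem IsArm.nbr (hA : IsArm G u v n e) (i : ℕ) (hi : i < n) (a : V)
    (ha : G.Adj (armSeq u v n e (i + 1)) a) :
    a = armSeq u v n e i ∨ a = armSeq u v n e (i + 2) := by
  rw [armSeq_mid i hi] at ha
  rcases hA.only _ _ ha with rfl | rfl | ⟨j, rfl⟩
  · right
    have := (hA.adju _).1 ha
    simp only at this
    rw [armSeq_end (i + 1) (by omega)]
  · left
    have := (hA.adjv _).1 ha
    simp only at this
    rw [this, armSeq_zero]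
  · have := (hA.adje _ _).1 ha
    simp only at this
    rcases this with h | h
    · right
      rw [armSeq_mid (i + 1) (by omega)]
      congr 1; ext; exact h.symm
    · left
      rw [← h, armSeq_mid j.1 j.2]

theorem IsArm.two (hA : IsArm G u v n e) (huv : u ≠ v) (i : Fin n) :
    ∃ b c, b ≠ c ∧ G.Adj (e i) b ∧ G.Adj (e i) c := by
  have h1 := hA.next huv i.1 i.2
  have h2 := hA.prev i.1 i.2
  rw [armSeq_mid i.1 i.2] at h1 h2
  exact ⟨_, _, h1.2, h1.1, h2⟩

theorem IsArm.notThree (hA : IsArm G u v n e) (i : Fin n) (b c d : V)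
    (hb : G.Adj (e i) b) (hc : G.Adj (e i) c) (hd : G.Adj (e i) d) :
    b = c ∨ b = d ∨ c = d := by
  rw [← armSeq_mid (u := u) (v := v) (e := e) i.1 i.2] at hb hc hd
  have hb := hA.nbr _ i.2 _ hb
  have hc := hA.nbr _ i.2 _ hc
  have hd := hA.nbr _ i.2 _ hd
  grind

theorem IsArm.map {n' : ℕ} {e' : Fin n' → V} (hA : IsArm G u v n e) (hA' : IsArm G u v n' e')
    (huv : u ≠ v) (g : G ≃g G) (hgu : g u = u) (hgv : g v = v) (hn : 0 < n) (hn' : 0 < n')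
    (h : g (e ⟨0, hn⟩) = e' ⟨0, hn'⟩) :
    ∃ h : n = n', ∀ i, g (e i) = e' (Fin.cast h i) := by
  have key := follow g (armSeq u v n e) (armSeq u v n' e') (min n n')
    (by rw [armSeq_zero, armSeq_zero, hgv])
    (by rw [armSeq_mid 0 hn, armSeq_mid 0 hn', h])
    (fun i hi => hA.next huv i (by omega))
    (fun i hi a ha => hA'.nbr i (by omega) a ha)
  have hnn : n = n' := by
    rcases lt_trichotomy n n' with h' | h' | h'
    · have := (key n (by omega)).2
      rw [armSeq_end n (by omega), armSeq_mid n h', hgu] at this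
      exact absurd this.symm (hA'.neu _)
    · exact h'
    · have := (key n' (by omega)).2
      rw [armSeq_mid n' h', armSeq_end n' (lt_irrefl _)] at this
      exact absurd (g.injective (this.trans hgu.symm)) (hA.neu _)
  refine ⟨hnn, fun i => ?_⟩
  have := (key i.1 (by omega)).2
  rw [armSeq_mid i.1 i.2, armSeq_mid i.1 (by omega)] at this
  exact this

end

theorem arm1 (p q r : ℕ) : IsArm (theta p q r) .u .v p .x1 where
  inj := fun a b h => by cases h; rfl
  neu := fun i h => by cases h
  nev := fun i h => by cases h
  adjv := fun i => Iff.rfl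
  adju := fun i => Iff.rfl
  adje := fun i j => Iff.rfl
  only := by
    rintro i (_ | _ | j | j | j) h
    · simp
    · simp
    · simp
    · exact h.elim
    · exact h.elim

theorem arm2 (p q r : ℕ) : IsArm (theta p q r) .u .v q .x2 where
  inj := fun a b h => by cases h; rfl
  neu := fun i h => by cases h
  nev := fun i h => by cases h
  adjv := fun i => Iff.rfl
  adju := fun i => Iff.rfl
  adje := fun i j => Iff.rfl
  only := by
    rintro i (_ | _ | j | j | j) h
    · simp
    · simp
    · exact h.elim
    · simp
    · exact h.elim

theorem arm3 (p q r : ℕ) : IsArm (theta p q r) .u .v r .x3 where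
  inj := fun a b h => by cases h; rfl
  neu := fun i h => by cases h
  nev := fun i h => by cases h
  adjv := fun i => Iff.rfl
  adju := fun i => Iff.rfl
  adje := fun i j => Iff.rfl
  only := by
    rintro i (_ | _ | j | j | j) h
    · simp
    · simp
    · exact h.elim
    · exact h.elim
    · simp

theorem theta_two (k m : ℕ) (a) : ∃ b c, b ≠ c ∧ (theta (2 * k + 1) (2 * k + 1) m).Adj a b ∧
    (theta (2 * k + 1) (2 * k + 1) m).Adj a c := by
  rcases a with _ | _ | i | i | i
  · refine ⟨.x1 ⟨2 * k, by omega⟩, .x2 ⟨2 * k, by omega⟩, by simp, ?_, ?_⟩ <;>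
    · show 2 * k = 2 * k + 1 - 1
      omega
  · exact ⟨.x1 ⟨0, by omega⟩, .x2 ⟨0, by omega⟩, by simp, rfl, rfl⟩
  · exact (arm1 _ _ _).two (by simp) i
  · exact (arm2 _ _ _).two (by simp) i
  · exact (arm3 _ _ _).two (by simp) i

/-- Exchange of the first two paths. -/
def thSwapFun {p r : ℕ} : ThetaV p p r → ThetaV p p r
  | .u => .u
  | .v => .v
  | .x1 i => .x2 i
  | .x2 i => .x1 i
  | .x3 i => .x3 i

/-- The reflection. -/
def thRevFun {p r : ℕ} : ThetaV p p r → ThetaV p p r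
  | .u => .v
  | .v => .u
  | .x1 i => .x1 i.rev
  | .x2 i => .x2 i.rev
  | .x3 i => .x3 i.rev

theorem thSwap_swap {p r : ℕ} (a : ThetaV p p r) : thSwapFun (thSwapFun a) = a := by
  cases a <;> rfl

theorem thRev_rev {p r : ℕ} (a : ThetaV p p r) : thRevFun (thRevFun a) = a := by
  cases a <;> simp [thRevFun]

/-- Exchange of the first two paths as an automorphism. -/
def thSwap (p r : ℕ) : theta p p r ≃g theta p p r where
  toFun := thSwapFun
  invFun := thSwapFun
  left_inv := thSwap_swap
  right_inv := thSwap_swap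
  map_rel_iff' := by
    rintro (_ | _ | i | i | i) (_ | _ | j | j | j) <;>
      simp [thSwapFun, theta]

/-- The reflection as an automorphism. -/
def thRev (p r : ℕ) : theta p p r ≃g theta p p r where
  toFun := thRevFun
  invFun := thRevFun
  left_inv := thRev_rev
  right_inv := thRev_rev
  map_rel_iff' := by
    rintro (_ | _ | i | i | i) (_ | _ | j | j | j) <;>
      simp [thRevFun, theta, Fin.val_rev] <;> omega

theorem thSwap_sq (p r : ℕ) : thSwap p r * thSwap p r = 1 :=
  RelIso.ext thSwap_swap

theorem thRev_sq (p r : ℕ) : thRev p r * thRev p r = 1 :=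
  RelIso.ext thRev_rev

theorem thSwap_comm (p r : ℕ) : thRev p r * thSwap p r = thSwap p r * thRev p r := by
  apply RelIso.ext
  intro a
  cases a <;> rfl

/-- The homomorphism from the Klein four-group. -/
def thRho (p r : ℕ) : K4 →* (theta p p r ≃g theta p p r) where
  toFun q := (if q.toAdd.1 = 0 then 1 else thSwap p r) * (if q.toAdd.2 = 0 then 1 else thRev p r)
  map_one' := by simp
  map_mul' := by
    have hz : ∀ z : ZMod 2, z = 0 ∨ z = 1 := by decide
    have h11 : (1 : ZMod 2) + 1 = 0 := by decide
    rintro ⟨a, b⟩ ⟨c, d⟩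
    have e1 : ∀ g, thSwap p r * (thSwap p r * g) = g := fun g => by
      rw [← mul_assoc, thSwap_sq, one_mul]
    have e2 : ∀ g, thRev p r * (thSwap p r * g) = thSwap p r * (thRev p r * g) := fun g => by
      rw [← mul_assoc, thSwap_comm, mul_assoc]
    show (if a + c = 0 then 1 else thSwap p r) * (if b + d = 0 then 1 else thRev p r) =
      ((if a = 0 then 1 else thSwap p r) * (if b = 0 then 1 else thRev p r)) *
      ((if c = 0 then 1 else thSwap p r) * (if d = 0 then 1 else thRev p r))
    rcases hz a with rfl | rfl <;> rcases hz b with rfl | rfl <;>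
    rcases hz c with rfl | rfl <;> rcases hz d with rfl | rfl <;>
    simp [h11, mul_assoc, thSwap_sq, thRev_sq, thSwap_comm, e1, e2]

theorem thRho_inj (k m : ℕ) : Function.Injective (thRho (2 * k + 1) m) := by
  have hz : ∀ z : ZMod 2, z = 0 ∨ z = 1 := by decide
  rw [injective_iff_map_eq_one]
  rintro ⟨a, b⟩ h
  have h1 := DFunLike.congr_fun h .u
  have h2 := DFunLike.congr_fun h (.x1 ⟨k, by omega⟩)
  rcases hz a with rfl | rfl <;> rcases hz b with rfl | rfl
  · rfl
  · cases h1
  · cases h2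
  · cases h1

/-- Automorphisms of the theta graph fixing the hubs and sending `x1` to itself. -/
theorem theta_class0 (k m : ℕ) (g : theta (2 * k + 1) (2 * k + 1) m ≃g theta (2 * k + 1) (2 * k + 1) m)
    (hgu : g .u = .u) (hgv : g .v = .v)
    (hg1 : g (.x1 ⟨0, by omega⟩) = .x1 ⟨0, by omega⟩)
    (hcond : m = 2 * k + 1 → ∃ i : Fin (2 * k + 1), ∀ y, g (.x1 i) ≠ .x3 y ∧ g (.x2 i) ≠ .x3 y) :
    g = 1 := by
  have A1 := arm1 (2 * k + 1) (2 * k + 1) m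
  have A2 := arm2 (2 * k + 1) (2 * k + 1) m
  have A3 := arm3 (2 * k + 1) (2 * k + 1) m
  obtain ⟨hk1, h1⟩ := A1.map A1 (by simp) g hgu hgv (by omega) (by omega) hg1
  have h2 : g (.x2 ⟨0, by omega⟩) = .x2 ⟨0, by omega⟩ := by
    have hadj : (theta (2 * k + 1) (2 * k + 1) m).Adj .v (.x2 ⟨0, by omega⟩) := rfl
    have hadj := g.map_adj_iff.2 hadj
    rw [hgv] at hadj
    rcases hy : g (.x2 ⟨0, by omega⟩) with _ | _ | i | i | i
    · rw [← hgu] at hy; have := g.injective hy; cases this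
    · rw [← hgv] at hy; have := g.injective hy; cases this
    · have := (h1 i).trans hy.symm
      cases g.injective this
    · rw [hy] at hadj
      congr 1; ext; exact hadj
    · exfalso
      have hm0 : 0 < m := i.pos
      rw [hy] at hadj
      have hi : i = ⟨0, hm0⟩ := Fin.ext hadj
      rw [hi] at hy
      obtain ⟨hm, h3⟩ := A2.map A3 (by simp) g hgu hgv (by omega) (by omega) hy
      obtain ⟨j, hj⟩ := hcond hm.symm
      exact (hj _).2 (h3 j)
  obtain ⟨hk2, h2⟩ := A2.map A2 (by simp) g hgu hgv (by omega) (by omega) h2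
  have h3 : ∀ i, g (.x3 i) = .x3 i := by
    intro i
    have hm : 0 < m := i.pos
    have h3 : g (.x3 ⟨0, hm⟩) = .x3 ⟨0, hm⟩ := by
      have hadj : (theta (2 * k + 1) (2 * k + 1) m).Adj .v (.x3 ⟨0, hm⟩) := rfl
      have hadj := g.map_adj_iff.2 hadj
      rw [hgv] at hadj
      rcases hy : g (.x3 ⟨0, hm⟩) with _ | _ | i | i | i
      · rw [← hgu] at hy; have := g.injective hy; cases this
      · rw [← hgv] at hy; have := g.injective hy; cases this
      · have := (h1 i).trans hy.symm
        cases g.injective this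
      · have := (h2 i).trans hy.symm
        cases g.injective this
      · rw [hy] at hadj
        congr 1; ext; exact hadj
    exact (A3.map A3 (by simp) g hgu hgv hm hm h3).2 i
  apply RelIso.ext
  rintro (_ | _ | i | i | i)
  · exact hgu
  · exact hgv
  · exact h1 i
  · exact h2 i
  · exact h3 i

theorem theta_hub (k m : ℕ) (g : theta (2 * k + 1) (2 * k + 1) m ≃g theta (2 * k + 1) (2 * k + 1) m)
    (a : ThetaV (2 * k + 1) (2 * k + 1) m) (ha : a = .u ∨ a = .v) : g a = .u ∨ g a = .v := by
  have h3 : ∃ b c d, b ≠ c ∧ b ≠ d ∧ c ≠ d ∧ (theta (2 * k + 1) (2 * k + 1) m).Adj a b ∧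
      (theta (2 * k + 1) (2 * k + 1) m).Adj a c ∧ (theta (2 * k + 1) (2 * k + 1) m).Adj a d := by
    by_cases hm : 0 < m
    · rcases ha with rfl | rfl
      · refine ⟨.x1 ⟨2 * k, by omega⟩, .x2 ⟨2 * k, by omega⟩, .x3 ⟨m - 1, by omega⟩,
          by simp, by simp, by simp, ?_, ?_, rfl⟩ <;>
        · show 2 * k = 2 * k + 1 - 1
          omega
      · exact ⟨.x1 ⟨0, by omega⟩, .x2 ⟨0, by omega⟩, .x3 ⟨0, by omega⟩,
          by simp, by simp, by simp, rfl, rfl, rfl⟩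
    · have hm : m = 0 := by omega
      rcases ha with rfl | rfl
      · refine ⟨.x1 ⟨2 * k, by omega⟩, .x2 ⟨2 * k, by omega⟩, .v,
          by simp, by simp, by simp, ?_, ?_, Or.inr (Or.inr hm)⟩ <;>
        · show 2 * k = 2 * k + 1 - 1
          omega
      · exact ⟨.x1 ⟨0, by omega⟩, .x2 ⟨0, by omega⟩, .u,
          by simp, by simp, by simp, rfl, rfl, Or.inr (Or.inr hm)⟩
  obtain ⟨b, c, d, hbc, hbd, hcd, hb, hc, hd⟩ := h3
  have hb := g.map_adj_iff.2 hb
  have hc := g.map_adj_iff.2 hc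
  have hd := g.map_adj_iff.2 hd
  have hbc := g.injective.ne hbc
  have hbd := g.injective.ne hbd
  have hcd := g.injective.ne hcd
  rcases hga : g a with _ | _ | i | i | i
  · simp
  · simp
  · rw [hga] at hb hc hd
    have := (arm1 _ _ _).notThree i _ _ _ hb hc hd
    tauto
  · rw [hga] at hb hc hd
    have := (arm2 _ _ _).notThree i _ _ _ hb hc hd
    tauto
  · rw [hga] at hb hc hd
    have := (arm3 _ _ _).notThree i _ _ _ hb hc hd
    tauto

theorem theta_class1 (k m : ℕ) (g : theta (2 * k + 1) (2 * k + 1) m ≃g theta (2 * k + 1) (2 * k + 1) m)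
    (hgu : g .u = .u) (hgv : g .v = .v)
    (hcond : m = 2 * k + 1 → ∃ i : Fin (2 * k + 1), ∀ y, g (.x1 i) ≠ .x3 y ∧ g (.x2 i) ≠ .x3 y) :
    g = 1 ∨ thSwap _ _ * g = 1 := by
  have hadj : (theta (2 * k + 1) (2 * k + 1) m).Adj .v (.x1 ⟨0, by omega⟩) := rfl
  have hadj := g.map_adj_iff.2 hadj
  rw [hgv] at hadj
  rcases hy : g (.x1 ⟨0, by omega⟩) with _ | _ | i | i | i
  · rw [← hgu] at hy; have := g.injective hy; cases this
  · rw [← hgv] at hy; have := g.injective hy; cases this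
  · left
    rw [hy] at hadj
    have hi : i = ⟨0, by omega⟩ := Fin.ext hadj
    rw [hi] at hy
    exact theta_class0 k m g hgu hgv hy hcond
  · right
    rw [hy] at hadj
    have hi : i = ⟨0, by omega⟩ := Fin.ext hadj
    rw [hi] at hy
    have hsw : ∀ a, (thSwap (2 * k + 1) m * g) a = thSwapFun (g a) := fun _ => rfl
    refine theta_class0 k m _ ?_ ?_ ?_ ?_
    · rw [hsw, hgu]; rfl
    · rw [hsw, hgv]; rfl
    · rw [hsw, hy]; rfl
    · intro hm
      obtain ⟨j, hj⟩ := hcond hm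
      refine ⟨j, fun y => ⟨fun h => (hj y).1 ?_, fun h => (hj y).2 ?_⟩⟩
      · rw [hsw] at h
        rw [← thSwap_swap (g _), h]; rfl
      · rw [hsw] at h
        rw [← thSwap_swap (g _), h]; rfl
  · exfalso
    have hm0 : 0 < m := i.pos
    rw [hy] at hadj
    have hi : i = ⟨0, hm0⟩ := Fin.ext hadj
    rw [hi] at hy
    obtain ⟨hm, h3⟩ := (arm1 _ _ _).map (arm3 _ _ _) (by simp) g hgu hgv (by omega) (by omega) hy
    obtain ⟨j, hj⟩ := hcond hm.symm
    exact (hj _).1 (h3 j)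

theorem theta_class (k m : ℕ) (g : theta (2 * k + 1) (2 * k + 1) m ≃g theta (2 * k + 1) (2 * k + 1) m)
    (hcond : m = 2 * k + 1 → ∃ i : Fin (2 * k + 1), ∀ y, g (.x1 i) ≠ .x3 y ∧ g (.x2 i) ≠ .x3 y) :
    ∃ q, thRho (2 * k + 1) m q = g := by
  have r00 : thRho (2 * k + 1) m (Multiplicative.ofAdd (0, 0)) = 1 := by simp [thRho]
  have r10 : thRho (2 * k + 1) m (Multiplicative.ofAdd (1, 0)) = thSwap _ _ := by simp [thRho]
  have r01 : thRho (2 * k + 1) m (Multiplicative.ofAdd (0, 1)) = thRev _ _ := by simp [thRho]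
  have hs : ∀ g : theta (2 * k + 1) (2 * k + 1) m ≃g theta (2 * k + 1) (2 * k + 1) m,
      thSwap _ _ * g = 1 → g = thSwap _ _ := by
    intro g h
    rw [← mul_left_cancel_iff (a := thSwap _ _), h, thSwap_sq]
  rcases theta_hub k m g .u (Or.inl rfl) with hu | hu
  · have hv : g .v = .v := by
      rcases theta_hub k m g .v (Or.inr rfl) with hv | hv
      · have := g.injective (hu.trans hv.symm); cases this
      · exact hv
    rcases theta_class1 k m g hu hv hcond with h | h
    · exact ⟨_, r00.trans h.symm⟩
    · exact ⟨_, r10.trans (hs g h).symm⟩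
  · have hv : g .v = .u := by
      rcases theta_hub k m g .v (Or.inr rfl) with hv | hv
      · exact hv
      · have := g.injective (hu.trans hv.symm); cases this
    have hsw : ∀ a, (thRev (2 * k + 1) m * g) a = thRevFun (g a) := fun _ => rfl
    have hcond' : m = 2 * k + 1 → ∃ i : Fin (2 * k + 1), ∀ y,
        (thRev (2 * k + 1) m * g) (.x1 i) ≠ .x3 y ∧ (thRev (2 * k + 1) m * g) (.x2 i) ≠ .x3 y := by
      intro hm
      obtain ⟨j, hj⟩ := hcond hm
      refine ⟨j, fun y => ⟨fun h => (hj y.rev).1 ?_, fun h => (hj y.rev).2 ?_⟩⟩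
      · rw [hsw] at h
        rw [← thRev_rev (g _), h]; rfl
      · rw [hsw] at h
        rw [← thRev_rev (g _), h]; rfl
    have hfin : ∀ q, thRho (2 * k + 1) m q = thRev _ _ * g →
        ∃ q, thRho (2 * k + 1) m q = g := by
      intro q hq
      refine ⟨Multiplicative.ofAdd (0, 1) * q, ?_⟩
      rw [map_mul, r01, hq, ← mul_assoc, thRev_sq, one_mul]
    rcases theta_class1 k m (thRev _ _ * g) (by rw [hsw, hu]; rfl) (by rw [hsw, hv]; rfl) hcond'
      with h | h
    · exact hfin _ (r00.trans h.symm)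
    · exact hfin _ (r10.trans (hs _ h).symm)

end ThetaPart

section Assembly

/-- Classes of attached trees. -/
abbrev ClsC (k : ℕ) : Type := Fin k ⊕ Unit ⊕ Unit

/-- Index sets of the classes. -/
def ClsI {k : ℕ} : ClsC k → Type
  | .inl _ => ZMod 2 × ZMod 2
  | .inr (.inl _) => ZMod 2
  | .inr (.inr _) => ZMod 2

instance clsAction {k : ℕ} : ∀ c : ClsC k, MulAction K4 (ClsI c)
  | .inl _ => inferInstanceAs (MulAction (Multiplicative (ZMod 2 × ZMod 2)) (ZMod 2 × ZMod 2))
  | .inr (.inl _) => MulAction.compHom (ZMod 2) fstK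
  | .inr (.inr _) => MulAction.compHom (ZMod 2) sndK

/-- Reference trees: vertex types. -/
def ClsU {k : ℕ} (WT : Fin 4 → Fin k → Type) (WΘ WΥ : Fin 2 → Type) : ClsC k → Type
  | .inl j => WT 0 j
  | .inr (.inl _) => WΘ 0
  | .inr (.inr _) => WΥ 0

/-- Reference trees. -/
def clsR {k : ℕ} {WT : Fin 4 → Fin k → Type} {WΘ WΥ : Fin 2 → Type}
    (TT : ∀ a j, SimpleGraph (WT a j)) (TΘ : ∀ j, SimpleGraph (WΘ j))
    (TΥ : ∀ j, SimpleGraph (WΥ j)) : ∀ c, SimpleGraph (ClsU WT WΘ WΥ c)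
  | .inl j => TT 0 j
  | .inr (.inl _) => TΘ 0
  | .inr (.inr _) => TΥ 0

/-- Reference roots. -/
def clst {k : ℕ} {WT : Fin 4 → Fin k → Type} {WΘ WΥ : Fin 2 → Type}
    (tT : ∀ a j, WT a j) (tΘ : ∀ j, WΘ j) (tΥ : ∀ j, WΥ j) : ∀ c, ClsU WT WΘ WΥ c
  | .inl j => tT 0 j
  | .inr (.inl _) => tΘ 0
  | .inr (.inr _) => tΥ 0

/-- Attachment vertices. -/
def clsx (k m : ℕ) : (Σ c : ClsC k, ClsI c) → ThetaV (2 * k + 1) (2 * k + 1) m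
  | ⟨.inl j, s⟩ => thRho (2 * k + 1) m (Multiplicative.ofAdd s) (.x1 ⟨j.1, by omega⟩)
  | ⟨.inr (.inl _), s⟩ =>
      thRho (2 * k + 1) m (Multiplicative.ofAdd ((s, 0) : ZMod 2 × ZMod 2)) (.x1 ⟨k, by omega⟩)
  | ⟨.inr (.inr _), s⟩ => thRho (2 * k + 1) m (Multiplicative.ofAdd ((0, s) : ZMod 2 × ZMod 2)) .u

theorem clsx_equiv (k m : ℕ) (q : K4) (c : ClsC k) (s : ClsI c) :
    thRho (2 * k + 1) m q (clsx k m ⟨c, s⟩) = clsx k m ⟨c, q • s⟩ := by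
  have hz : ∀ z : ZMod 2, z = 0 ∨ z = 1 := by decide
  rcases q with ⟨a, b⟩
  have hrev : ∀ b : ZMod 2, thRho (2 * k + 1) m (Multiplicative.ofAdd (0, b)) (.x1 ⟨k, by omega⟩)
      = .x1 ⟨k, by omega⟩ := by
    intro b
    rcases hz b with rfl | rfl
    · rfl
    · show ThetaV.x1 (Fin.rev ⟨k, _⟩) = _
      congr 1; ext; simp [Fin.val_rev]; omega
  have hsw : ∀ a : ZMod 2, thRho (2 * k + 1) m (Multiplicative.ofAdd (a, 0)) .u = .u := by
    intro a
    rcases hz a with rfl | rfl <;> rfl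
  have hmul : ∀ q q' y, thRho (2 * k + 1) m q (thRho (2 * k + 1) m q' y) =
      thRho (2 * k + 1) m (q * q') y := fun q q' y => by rw [map_mul]; rfl
  rcases c with j | _ | _
  · exact hmul _ _ _
  · change ZMod 2 at s
    show thRho (2 * k + 1) m (Multiplicative.ofAdd ((a, b) : ZMod 2 × ZMod 2))
      (thRho (2 * k + 1) m (Multiplicative.ofAdd ((s, 0) : ZMod 2 × ZMod 2)) _) =
      thRho (2 * k + 1) m (Multiplicative.ofAdd (((a : ZMod 2) + s, 0) : ZMod 2 × ZMod 2)) _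
    have : (Multiplicative.ofAdd ((a, b) : ZMod 2 × ZMod 2)) *
        Multiplicative.ofAdd ((s, 0) : ZMod 2 × ZMod 2) =
        Multiplicative.ofAdd (((a : ZMod 2) + s, 0) : ZMod 2 × ZMod 2) *
          Multiplicative.ofAdd ((0, b) : ZMod 2 × ZMod 2) := by
      rw [← ofAdd_add, ← ofAdd_add]; simp
    rw [hmul]
    rw [this, ← hmul, hrev]
  · change ZMod 2 at s
    show thRho (2 * k + 1) m (Multiplicative.ofAdd ((a, b) : ZMod 2 × ZMod 2))
      (thRho (2 * k + 1) m (Multiplicative.ofAdd ((0, s) : ZMod 2 × ZMod 2)) _) =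
      thRho (2 * k + 1) m (Multiplicative.ofAdd ((0, (b : ZMod 2) + s) : ZMod 2 × ZMod 2)) _
    have : (Multiplicative.ofAdd ((a, b) : ZMod 2 × ZMod 2)) *
        Multiplicative.ofAdd ((0, s) : ZMod 2 × ZMod 2) =
        Multiplicative.ofAdd ((0, (b : ZMod 2) + s) : ZMod 2 × ZMod 2) *
          Multiplicative.ofAdd ((a, 0) : ZMod 2 × ZMod 2) := by
      rw [← ofAdd_add, ← ofAdd_add]; simp
    rw [hmul]
    rw [this, ← hmul, hsw]

/-- Numbering of the four trees of a class. -/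
def four : Fin 4 ≃ ZMod 2 × ZMod 2 where
  toFun := ![(0, 0), (0, 1), (1, 0), (1, 1)]
  invFun s := if s = (0, 0) then 0 else if s = (0, 1) then 1 else if s = (1, 0) then 2 else 3
  left_inv := by decide
  right_inv := by decide

/-- Numbering of the two trees of a class. -/
def twoE : Fin 2 ≃ ZMod 2 := Equiv.refl _

/-- Reindexing of the attached trees. -/
def clsσ (k : ℕ) : Stmt3Index k ≃ Σ c : ClsC k, ClsI c where
  toFun
    | .inl p => ⟨.inl p.2, four p.1⟩
    | .inr (.inl j) => ⟨.inr (.inl ()), twoE j⟩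
    | .inr (.inr j) => ⟨.inr (.inr ()), twoE j⟩
  invFun
    | ⟨.inl j, s⟩ => .inl (four.symm s, j)
    | ⟨.inr (.inl _), s⟩ => .inr (.inl (twoE.symm s))
    | ⟨.inr (.inr _), s⟩ => .inr (.inr (twoE.symm s))
  left_inv := by
    rintro (⟨a, j⟩ | j | j)
    · show Sum.inl (four.symm (four a), j) = _
      rw [Equiv.symm_apply_apply]
    · rfl
    · rfl
  right_inv := by
    rintro ⟨j | _ | _, s⟩
    · exact congrArg (fun s => (⟨.inl j, s⟩ : Σ c : ClsC k, ClsI c)) (four.apply_symm_apply s)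
    · rfl
    · rfl

theorem clsx_σ (k m : ℕ) (i : Stmt3Index k) : clsx k m (clsσ k i) = stmt3x k m i := by
  rcases i with ⟨a, j⟩ | j | j
  · fin_cases a
    · rfl
    · show ThetaV.x1 (Fin.rev _) = ThetaV.x1 _
      congr 1; ext; simp [Fin.val_rev]
    · rfl
    · show ThetaV.x2 (Fin.rev _) = ThetaV.x2 _
      congr 1; ext; simp [Fin.val_rev]
  · fin_cases j <;> rfl
  · fin_cases j <;> rfl

theorem stmt3x_inj (k m : ℕ) : Function.Injective (stmt3x k m) := by
  rintro (⟨a, j⟩ | j | j) (⟨a', j'⟩ | j' | j') h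
  · fin_cases a <;> fin_cases a' <;> simp [stmt3x] at h ⊢ <;> omega
  · fin_cases a <;> fin_cases j' <;> simp [stmt3x] at h ⊢ <;> omega
  · fin_cases a <;> fin_cases j' <;> simp [stmt3x] at h ⊢
  · fin_cases a' <;> fin_cases j <;> simp [stmt3x] at h ⊢ <;> omega
  · fin_cases j <;> fin_cases j' <;> simp [stmt3x] at h ⊢
  · fin_cases j <;> fin_cases j' <;> simp [stmt3x] at h ⊢
  · fin_cases a' <;> fin_cases j <;> simp [stmt3x] at h ⊢
  · fin_cases j <;> fin_cases j' <;> simp [stmt3x] at h ⊢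
  · fin_cases j <;> fin_cases j' <;> simp [stmt3x] at h ⊢

theorem clsx_inj (k m : ℕ) : Function.Injective (clsx k m) := by
  intro a b h
  obtain ⟨a, rfl⟩ := (clsσ k).surjective a
  obtain ⟨b, rfl⟩ := (clsσ k).surjective b
  rw [clsx_σ, clsx_σ] at h
  rw [stmt3x_inj k m h]

theorem clsx_ne_x3 (k m : ℕ) (i) (y) : clsx k m i ≠ .x3 y := by
  obtain ⟨i, rfl⟩ := (clsσ k).surjective i
  rw [clsx_σ]
  rcases i with ⟨a, j⟩ | j | j
  · fin_cases a <;> simp [stmt3x]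
  · fin_cases j <;> simp [stmt3x]
  · fin_cases j <;> simp [stmt3x]

/-- Splitting the product over the classes. -/
def clsSplit {k : ℕ} (M : ClsC k → Type) [∀ c, Group (M c)] :
    (∀ c, ClsI c → M c) ≃*
      ((∀ j, ZMod 2 × ZMod 2 → M (.inl j)) × (ZMod 2 → M (.inr (.inl ()))) ×
        (ZMod 2 → M (.inr (.inr ())))) where
  toFun n := (fun j => n (.inl j), n (.inr (.inl ())), n (.inr (.inr ())))
  invFun n
    | .inl j => n.1 j
    | .inr (.inl _) => n.2.1
    | .inr (.inr _) => n.2.2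
  left_inv n := by
    funext c
    rcases c with j | _ | _ <;> rfl
  right_inv n := rfl
  map_mul' a b := rfl

end Assembly

/-- Corollary 2.3. -/
theorem aut_bicyclic_first_type_general
    (k : ℕ) (hk : 0 < k) (m : ℕ)
    {WT : Fin 4 → Fin k → Type} {WΘ WΥ : Fin 2 → Type}
    [∀ a j, Fintype (WT a j)] [∀ j, Fintype (WΘ j)] [∀ j, Fintype (WΥ j)]
    (TT : ∀ a j, SimpleGraph (WT a j)) (TΘ : ∀ j, SimpleGraph (WΘ j))
    (TΥ : ∀ j, SimpleGraph (WΥ j))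
    (tT : ∀ a j, WT a j) (tΘ : ∀ j, WΘ j) (tΥ : ∀ j, WΥ j)
    (hTtree : ∀ a j, (TT a j).IsTree) (hΘtree : ∀ j, (TΘ j).IsTree)
    (hΥtree : ∀ j, (TΥ j).IsTree)
    (hTiso : ∀ a a' j, ∃ e : TT a j ≃g TT a' j, e (tT a j) = tT a' j)
    (hΘiso : ∃ e : TΘ 0 ≃g TΘ 1, e (tΘ 0) = tΘ 1)
    (hΥiso : ∃ e : TΥ 0 ≃g TΥ 1, e (tΥ 0) = tΥ 1)
    (hside : m + 1 ≠ 2 * k + 2 ∨ Nontrivial (WT 0 ⟨0, hk⟩) ∨ Nontrivial (WΘ 0)) :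
    Nonempty ((stmt3Graph k m TT TΘ TΥ tT tΘ tΥ ≃g stmt3Graph k m TT TΘ TΥ tT tΘ tΥ) ≃*
      stmt3group (fun j => ↥(autStab (TT 0 j) (tT 0 j)))
        ↥(autStab (TΘ 0) (tΘ 0)) ↥(autStab (TΥ 0) (tΥ 0))) := by
  have hΘiso' : ∀ j, ∃ e : TΘ j ≃g TΘ 0, e (tΘ j) = tΘ 0 := by
    obtain ⟨e, he⟩ := hΘiso
    intro j
    fin_cases j
    · exact ⟨RelIso.refl _, rfl⟩
    · exact ⟨e.symm, by rw [RelIso.symm_apply_eq]; exact he.symm⟩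
  have hΥiso' : ∀ j, ∃ e : TΥ j ≃g TΥ 0, e (tΥ j) = tΥ 0 := by
    obtain ⟨e, he⟩ := hΥiso
    intro j
    fin_cases j
    · exact ⟨RelIso.refl _, rfl⟩
    · exact ⟨e.symm, by rw [RelIso.symm_apply_eq]; exact he.symm⟩
  have hiso : ∀ i : Stmt3Index k, ∃ e : stmt3T TT TΘ TΥ i ≃g clsR TT TΘ TΥ (clsσ k i).1,
      e (stmt3root tT tΘ tΥ i) = clst tT tΘ tΥ (clsσ k i).1 := by
    rintro (⟨a, j⟩ | j | j)
    · exact hTiso a 0 j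
    · exact hΘiso' j
    · exact hΥiso' j
  choose e he using hiso
  obtain ⟨E⟩ := attach_congr (theta (2 * k + 1) (2 * k + 1) m)
    (fun i : (Σ c : ClsC k, ClsI c) => clsR TT TΘ TΥ i.1) (fun i => clst tT tΘ tΥ i.1)
    (clsx k m) (clsσ k) e he (clsx_σ k m)
  have : ∀ c, Finite (ClsU WT WΘ WΥ c) := by
    rintro (j | _ | _)
    · exact inferInstanceAs (Finite (WT 0 j))
    · exact inferInstanceAs (Finite (WΘ 0))
    · exact inferInstanceAs (Finite (WΥ 0))
  have htree : ∀ c, (clsR TT TΘ TΥ c).IsTree := by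
    rintro (j | _ | _)
    · exact hTtree 0 j
    · exact hΘtree 0
    · exact hΥtree 0
  obtain ⟨Ψ⟩ := treeMain (theta (2 * k + 1) (2 * k + 1) m) (clsR TT TΘ TΥ) (clst tT tΘ tΥ)
    (clsx k m) (thRho (2 * k + 1) m) htree (clsx_inj k m) (thRho_inj k m) (theta_two k m)
    (by
      intro g hg
      apply theta_class
      intro hm
      rcases hside with h | h | h
      · omega
      · refine ⟨⟨0, by omega⟩, fun y => ⟨fun h' => ?_, fun h' => ?_⟩⟩
        · obtain ⟨j, hj⟩ := hg ⟨.inl ⟨0, hk⟩, ((0, 0) : ZMod 2 × ZMod 2)⟩ h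
          exact clsx_ne_x3 k m j y (hj.symm.trans h')
        · obtain ⟨j, hj⟩ := hg ⟨.inl ⟨0, hk⟩, ((1, 0) : ZMod 2 × ZMod 2)⟩ h
          exact clsx_ne_x3 k m j y (hj.symm.trans h')
      · refine ⟨⟨k, by omega⟩, fun y => ⟨fun h' => ?_, fun h' => ?_⟩⟩
        · obtain ⟨j, hj⟩ := hg ⟨.inr (.inl ()), (0 : ZMod 2)⟩ h
          exact clsx_ne_x3 k m j y (hj.symm.trans h')
        · obtain ⟨j, hj⟩ := hg ⟨.inr (.inl ()), (1 : ZMod 2)⟩ h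
          exact clsx_ne_x3 k m j y (hj.symm.trans h'))
    (clsx_equiv k m)
  let conj : (stmt3Graph k m TT TΘ TΥ tT tΘ tΥ ≃g stmt3Graph k m TT TΘ TΥ tT tΘ tΥ) ≃*
      (attachTrees (theta (2 * k + 1) (2 * k + 1) m)
        (fun i : (Σ c : ClsC k, ClsI c) => clsR TT TΘ TΥ i.1) (fun i => clst tT tΘ tΥ i.1)
        (clsx k m) ≃g
       attachTrees (theta (2 * k + 1) (2 * k + 1) m)
        (fun i : (Σ c : ClsC k, ClsI c) => clsR TT TΘ TΥ i.1) (fun i => clst tT tΘ tΥ i.1)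
        (clsx k m)) :=
    { toFun := fun f => (E.symm.trans f).trans E
      invFun := fun f => (E.trans f).trans E.symm
      left_inv := fun f => by
        apply RelIso.ext; intro z
        show E.symm (E (f (E.symm (E z)))) = f z
        simp
      right_inv := fun f => by
        apply RelIso.ext; intro z
        show E (E.symm (f (E (E.symm z)))) = f z
        simp
      map_mul' := fun f g => by
        apply RelIso.ext; intro z
        show E (f (g (E.symm z))) = E (f (E.symm (E (g (E.symm z)))))
        simp }
  let S : ((∀ c, ClsI c → autStab (clsR TT TΘ TΥ c) (clst tT tΘ tΥ c)) ⋊[treeAct K4 ClsI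
      (clsR TT TΘ TΥ) (clst tT tΘ tΥ)] K4) ≃*
      stmt3group (fun j => ↥(autStab (TT 0 j) (tT 0 j)))
        ↥(autStab (TΘ 0) (tΘ 0)) ↥(autStab (TΥ 0) (tΥ 0)) :=
    SemidirectProduct.congr
      (clsSplit fun c => autStab (clsR TT TΘ TΥ c) (clst tT tΘ tΥ c))
      (MulEquiv.refl K4) (fun q => MulEquiv.ext fun n => rfl)
  exact ⟨(conj.trans Ψ.symm).trans S⟩
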